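/- Let (d_i)_{i∈C} be a degree assignment for W and let α,β ∈ A¹ satisfy α∧β = 0 in A²_{W,k}. Then for every i ∈ C: β_i·(Σ_{j∈C} d_j·α_j) = α_i·(Σ_{j∈C} d_j·β_j) in k. In particular, if α_i = 0 and Σ_{j∈C} d_j·α_j ≠ 0 in k, then β_i = 0. -/

import Mathlib

/-!
Let `γ = β i • α - α i • β`, so that `γ i = 0`; the claim is that the sum of the `d j * γ j`
vanishes. If `d i` is zero in the coefficients, this is the `i`-th coordinate of `α ∧ β` at
infinity. Otherwise multiply by `d i`: Bezout, applied to all `j ≠ i`, turns the product into a sum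
over the branches `δ` of the component `i`, with local contributions `∑ j, μ_P(δ, j) * γ j`.

Each contribution vanishes. If all branches at `P` lie on one component, the multiplicities are
zero. Otherwise `I_P` is spanned by the cyclic relations, which the linear form
`ψ^a ∧ ψ^b ↦ ψ^b_δ - ψ^a_δ` on `Λ² A_P` kills because it is a coboundary, and the value of this form
on the local part of `α ∧ β` is precisely the contribution of `δ`.
-/

open scoped Classical

/-- The weak combinatorial type of a plane projective curve. -/
structure WeakComb (p : ℕ) where
  /-- the set of irreducible components -/
  C : Type
  [fintypeC : Fintype C]
  [decEqC : DecidableEq C]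
  [nonemptyC : Nonempty C]
  /-- the set of singular points -/
  S : Type
  [fintypeS : Fintype S]
  [decEqS : DecidableEq S]
  /-- the local branches at each singular point -/
  Δ : S → Type
  [fintypeΔ : ∀ P, Fintype (Δ P)]
  [decEqΔ : ∀ P, DecidableEq (Δ P)]
  /-- each branch belongs to a component -/
  φ : ∀ P, Δ P → C
  /-- local intersection multiplicities of pairs of branches -/
  μ : ∀ P, Δ P → Δ P → ℕ
  μ_symm : ∀ P δ δ', φ P δ ≠ φ P δ' → μ P δ δ' = μ P δ' δ
  μ_pos : ∀ P δ δ', φ P δ ≠ φ P δ' → 0 < μ P δ δ'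

attribute [instance] WeakComb.fintypeC WeakComb.decEqC WeakComb.nonemptyC
attribute [instance] WeakComb.fintypeS WeakComb.decEqS WeakComb.fintypeΔ WeakComb.decEqΔ

namespace WeakComb

variable {p : ℕ} (W : WeakComb p)

/-- μ_P(δ,δ') with the convention that it vanishes on pairs of branches of the same component. -/
def muk (P : W.S) (δ δ' : W.Δ P) : ℕ :=
  if W.φ P δ = W.φ P δ' then 0 else W.μ P δ δ'

/-- μ_P(δ, j): the multiplicity of intersection of the branch δ with the component j. -/
def muC (P : W.S) (δ : W.Δ P) (j : W.C) : ℕ :=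
  ∑ δ' : W.Δ P, if W.φ P δ' = j then W.muk P δ δ' else 0

/-- A degree assignment: positive degrees satisfying the Bezout condition. -/
def IsDegree (d : W.C → ℕ) : Prop :=
  (∀ i, 0 < d i) ∧
  ∀ i j, i ≠ j →
    d i * d j = ∑ P : W.S, ∑ δ : W.Δ P, if W.φ P δ = i then W.muC P δ j else 0

/-- The basis vector σ_i of A¹ = (C → ZMod p). -/
noncomputable def sigma (i : W.C) : W.C → ZMod p := Pi.single i 1

/-- The basis vector ψ_P^δ of A_P = (Δ_P → ZMod p). -/
noncomputable def psi (P : W.S) (δ : W.Δ P) : W.Δ P → ZMod p := Pi.single δ 1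

/-- ψ_P^δ ∧ ψ_P^δ' as an element of Λ² A_P. -/
noncomputable def psiW (P : W.S) (δ δ' : W.Δ P) : ⋀[ZMod p]^2 (W.Δ P → ZMod p) :=
  ⟨ExteriorAlgebra.ιMulti (ZMod p) 2 ![W.psi P δ, W.psi P δ'],
   ExteriorAlgebra.ιMulti_range (ZMod p) 2 (Set.mem_range_self _)⟩

/-- The subspace I_P of Λ² A_P. -/
noncomputable def IP (P : W.S) : Submodule (ZMod p) (⋀[ZMod p]^2 (W.Δ P → ZMod p)) :=
  Submodule.span (ZMod p)
    ({x | ∃ δ1 δ2 δ3 : W.Δ P, x = W.psiW P δ1 δ2 + W.psiW P δ2 δ3 + W.psiW P δ3 δ1} ∪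
     {x | (∀ δ δ' : W.Δ P, W.φ P δ = W.φ P δ') ∧ ∃ δ1 δ2 : W.Δ P, x = W.psiW P δ1 δ2})

/-- The degree-two part A² = A^{2,0} ⊕ A^{2,∞} of the Combinatorial Aomoto algebra. -/
abbrev A2 (d : W.C → ℕ) : Type :=
  ((P : W.S) → (⋀[ZMod p]^2 (W.Δ P → ZMod p)) ⧸ W.IP P) ×
  ({i : W.C // p ∣ d i} → ZMod p)

/-- The wedge product A¹ × A¹ → A², extending σ_i ∧ σ_j bilinearly. -/
noncomputable def wedge (d : W.C → ℕ) (α β : W.C → ZMod p) : W.A2 d :=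
  (fun P => ∑ δ : W.Δ P, ∑ δ' : W.Δ P,
      (α (W.φ P δ) * β (W.φ P δ') * (W.muk P δ δ' : ZMod p)) •
        Submodule.Quotient.mk (W.psiW P δ δ'),
   fun i => α i.1 * (∑ j : W.C, (d j : ZMod p) * β j)
          - β i.1 * (∑ j : W.C, (d j : ZMod p) * α j))

/-- The linear map ·∧α : A¹ → A², β ↦ β ∧ α. -/
noncomputable def wedgeL (d : W.C → ℕ) (α : W.C → ZMod p) :
    (W.C → ZMod p) →ₗ[ZMod p] W.A2 d where
  toFun β := W.wedge d β α
  map_add' β γ := by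
    refine Prod.ext ?_ ?_
    · funext P
      simp only [wedge, Pi.add_apply, Prod.fst_add]
      rw [← Finset.sum_add_distrib]
      refine Finset.sum_congr rfl fun δ _ => ?_
      rw [← Finset.sum_add_distrib]
      refine Finset.sum_congr rfl fun δ' _ => ?_
      rw [← add_smul, add_mul, add_mul]
    · funext i
      simp only [wedge, Pi.add_apply, Prod.snd_add]
      rw [show (∑ x : W.C, (d x : ZMod p) * (β x + γ x))
            = (∑ x : W.C, (d x : ZMod p) * β x) + ∑ x : W.C, (d x : ZMod p) * γ x by
        rw [← Finset.sum_add_distrib]; exact Finset.sum_congr rfl fun x _ => by ring]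
      ring
  map_smul' c β := by
    refine Prod.ext ?_ ?_
    · funext P
      simp only [wedge, Pi.smul_apply, smul_eq_mul, RingHom.id_apply, Prod.smul_fst]
      rw [Finset.smul_sum]
      refine Finset.sum_congr rfl fun δ _ => ?_
      rw [Finset.smul_sum]
      refine Finset.sum_congr rfl fun δ' _ => ?_
      rw [smul_smul]
      ring_nf
    · funext i
      simp only [wedge, Pi.smul_apply, smul_eq_mul, RingHom.id_apply, Prod.smul_snd]
      rw [show (∑ x : W.C, (d x : ZMod p) * (c * β x)) = c * ∑ x : W.C, (d x : ZMod p) * β x by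
        rw [Finset.mul_sum]; exact Finset.sum_congr rfl fun x _ => by ring]
      ring

/-- The kernel of ·∧α : A¹ → A². -/
noncomputable def wedgeKer (d : W.C → ℕ) (α : W.C → ZMod p) :
    Submodule (ZMod p) (W.C → ZMod p) :=
  LinearMap.ker (W.wedgeL d α)

/-- H¹ of the Combinatorial Aomoto complex with differential ·∧α. -/
noncomputable abbrev H1 (d : W.C → ℕ) (α : W.C → ZMod p) :=
  (W.wedgeKer d α) ⧸
    (Submodule.comap (W.wedgeKer d α).subtype (Submodule.span (ZMod p) {α}))

end WeakComb

namespace WeakComb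

variable {p : ℕ} (W : WeakComb p)

/-- The resonance condition for (α,β) at the branch δ of the point P. -/
def ResCond (α β : W.C → ZMod p) (P : W.S) (δ : W.Δ P) : Prop :=
  β (W.φ P δ) * (∑ j : W.C, (W.muC P δ j : ZMod p) * α j)
    - α (W.φ P δ) * (∑ j : W.C, (W.muC P δ j : ZMod p) * β j) = 0

/-- P is a p-transversal point for the pair of components i ≠ j. -/
def PTransPoint (P : W.S) (i j : W.C) : Prop :=
  i ≠ j ∧ (∀ δ : W.Δ P, W.φ P δ = i ∨ W.φ P δ = j) ∧
  (∃ δ : W.Δ P, W.φ P δ = i) ∧ (∃ δ : W.Δ P, W.φ P δ = j) ∧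
  ((∃ δ : W.Δ P, W.φ P δ = i ∧ ((W.muC P δ j : ZMod p) ≠ 0)) ∨
   (∃ δ : W.Δ P, W.φ P δ = j ∧ ((W.muC P δ i : ZMod p) ≠ 0)))

/-- The components i and j are p-transversal at a point. -/
def PTransComponents (i j : W.C) : Prop := ∃ P : W.S, W.PTransPoint P i j

/-- α is non-coordinate if all its coordinates are nonzero. -/
def NonCoordinate (α : W.C → ZMod p) : Prop := ∀ i, α i ≠ 0

end WeakComb

/-- The setoid (partition) obtained from s by merging the classes of c₀ and c₁. -/
def mergeSetoid {α : Type*} (s : Setoid α) (c₀ c₁ : α) : Setoid α :=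
  Relation.EqvGen.setoid (fun a b => s.r a b ∨ (a = c₀ ∧ b = c₁))

namespace WeakComb

variable {p : ℕ} (W : WeakComb p)

/-- W is p-transversal at P with respect to (α, π), where the surjection π is encoded by the
setoid s of its fibres; the two classes π(φ_P(Δ_P)) = {i',j'} are those of c₀ and c₁. -/
def PTransversalAt (α : W.C → ZMod p) (s : Setoid W.C) (P : W.S) (c₀ c₁ : W.C) : Prop :=
  ¬ s.r c₀ c₁ ∧
  (∀ δ : W.Δ P, s.r (W.φ P δ) c₀ ∨ s.r (W.φ P δ) c₁) ∧
  (∃ δ : W.Δ P, s.r (W.φ P δ) c₀) ∧ (∃ δ : W.Δ P, s.r (W.φ P δ) c₁) ∧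
  ∃ δ : W.Δ P, s.r (W.φ P δ) c₀ ∧
    (∑ δ' : W.Δ P, if s.r (W.φ P δ') c₁
        then (W.muk P δ δ' : ZMod p) * α (W.φ P δ') else 0) ≠ 0

/-- A p-reduction step with respect to α. -/
def RedStep (α : W.C → ZMod p) (s s' : Setoid W.C) : Prop :=
  ∃ (P : W.S) (c₀ c₁ : W.C), W.PTransversalAt α s P c₀ c₁ ∧ s' = mergeSetoid s c₀ c₁

/-- W is completely p-reductive with respect to α: starting from the identity partition (⊥),
some finite sequence of p-reduction steps reaches the one-class partition (⊤). -/
def CompletelyPReductive (α : W.C → ZMod p) : Prop :=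
  Relation.ReflTransGen (W.RedStep α) ⊥ ⊤

/-- β is π-proportional to α, for the surjection π encoded by the setoid s: on each class
of s, β is a scalar multiple of α. -/
def Proportional (s : Setoid W.C) (α β : W.C → ZMod p) : Prop :=
  ∀ c : W.C, ∃ l : ZMod p, ∀ c', s.r c c' → β c' = l * α c'

end WeakComb

/-- A combinatorial quasi-fiber structure of rank r on W. -/
structure QuasiFiber {p : ℕ} (W : WeakComb p) (r : ℕ) where
  /-- which quasi-fiber each component belongs to -/
  g : W.C → Fin r
  g_surj : Function.Surjective g
  /-- multiplicities of components inside the quasi-fibers -/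
  m : W.C → ℕ
  m_pos : ∀ c, 0 < m c
  /-- the set of base points -/
  B : Set W.S
  fiber_off_base : ∀ P : W.S, P ∉ B → ∀ δ δ' : W.Δ P, g (W.φ P δ) = g (W.φ P δ')

namespace WeakComb

variable {p : ℕ} (W : WeakComb p) {r : ℕ}

/-- M_s(δ) for a branch δ at a base point P. -/
noncomputable def Mcoef (F : QuasiFiber W r) (P : W.S) (δ : W.Δ P) (s : Fin r) : ZMod p :=
  ∑ δ' : W.Δ P,
    if W.φ P δ' ≠ W.φ P δ ∧ F.g (W.φ P δ') = s
      then ((F.m (W.φ P δ') * W.μ P δ δ' : ℕ) : ZMod p) else 0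

/-- ω_a = Σ_c m_c · a_{g(c)} · σ_c ∈ A¹. -/
noncomputable def omega (F : QuasiFiber W r) (a : Fin r → ZMod p) : W.C → ZMod p :=
  fun c => (F.m c : ZMod p) * a (F.g c)

/-- The restricted combinatorics W°_s of the quasi-fiber s. -/
noncomputable def restrict (F : QuasiFiber W r) (s : Fin r) : WeakComb p where
  C := {c : W.C // F.g c = s}
  fintypeC := Fintype.ofFinite _
  decEqC := inferInstance
  nonemptyC := by obtain ⟨c, hc⟩ := F.g_surj s; exact ⟨⟨c, hc⟩⟩
  S := {P : W.S // Nonempty (W.Δ P) ∧ ∀ δ : W.Δ P, F.g (W.φ P δ) = s}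
  fintypeS := Fintype.ofFinite _
  decEqS := inferInstance
  Δ := fun P => W.Δ P.1
  fintypeΔ := fun P => inferInstance
  decEqΔ := fun P => inferInstance
  φ := fun P δ => ⟨W.φ P.1 δ, P.2.2 δ⟩
  μ := fun P δ δ' => W.μ P.1 δ δ'
  μ_symm := fun P δ δ' h => W.μ_symm P.1 δ δ' (fun e => h (Subtype.ext e))
  μ_pos := fun P δ δ' h => W.μ_pos P.1 δ δ' (fun e => h (Subtype.ext e))

/-- The restriction ω_a|_s of ω_a to the restricted combinatorics W°_s. -/
noncomputable def omegaRes (F : QuasiFiber W r) (a : Fin r → ZMod p) (s : Fin r) :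
    (W.restrict F s).C → ZMod p :=
  fun c => (F.m c.1 : ZMod p) * a s

end WeakComb

section Algebra

variable {R ι : Type*} [CommRing R] [Fintype ι]

lemma mul_sum_sub_mul_sum (c f g : ι → R) (x y : R) :
    y * (∑ j, c j * f j) - x * (∑ j, c j * g j) = ∑ j, c j * (y * f j - x * g j) := by
  simp only [Finset.mul_sum, ← Finset.sum_sub_distrib]
  exact Finset.sum_congr rfl fun j _ => by ring

/-- The linear form `ε ∧ e_k` on `Λ² (ι → R)`, where `ε` is the sum of the coordinates and `e_k` is
the `k`-th coordinate. It contracts the local part of a wedge product at a branch. -/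
noncomputable def sumWedgeProj (k : ι) : Module.Dual R (⋀[R]^2 (ι → R)) :=
  exteriorPower.alternatingMapToDual R (ι → R) 2 ![∑ a, LinearMap.proj a, LinearMap.proj k]

variable [DecidableEq ι]

lemma sumWedgeProj_single_single (k a b : ι) :
    sumWedgeProj k (exteriorPower.ιMulti R 2 ![Pi.single a 1, Pi.single b 1])
      = (Pi.single b 1 : ι → R) k - (Pi.single a 1 : ι → R) k := by
  simp [sumWedgeProj, Matrix.det_fin_two]

lemma sum_sum_mul_single_sub_single (F : ι → ι → R) (k : ι) :
    ∑ a, ∑ b, F a b * ((Pi.single b 1 : ι → R) k - (Pi.single a 1 : ι → R) k)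
      = ∑ a, (F a k - F k a) := by
  simp only [mul_sub, Finset.sum_sub_distrib, ← Finset.sum_mul]
  simp only [Pi.single_apply, mul_boole, Finset.sum_ite_eq, Finset.mem_univ, if_true]

end Algebra

namespace WeakComb

variable {p : ℕ} (W : WeakComb p)

lemma muk_comm (P : W.S) (δ δ' : W.Δ P) : W.muk P δ δ' = W.muk P δ' δ := by
  by_cases e : W.φ P δ = W.φ P δ'
  · simp only [muk, if_pos e, if_pos e.symm]
  · simp only [muk, if_neg e, if_neg (Ne.symm e), W.μ_symm P δ δ' e]

lemma sum_muC_mul {R : Type*} [Semiring R] (P : W.S) (δ : W.Δ P) (γ : W.C → R) :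
    ∑ j, (W.muC P δ j : R) * γ j = ∑ δ', (W.muk P δ δ' : R) * γ (W.φ P δ') := by
  simp only [muC, Nat.cast_sum, Nat.cast_ite, Nat.cast_zero, Finset.sum_mul, ite_mul, zero_mul]
  rw [Finset.sum_comm]
  simp only [Finset.sum_ite_eq, Finset.mem_univ, if_true]

lemma sumWedgeProj_psiW (P : W.S) (δ a b : W.Δ P) :
    sumWedgeProj δ (W.psiW P a b) = W.psi P b δ - W.psi P a δ :=
  sumWedgeProj_single_single δ a b

lemma IP_le_ker_sumWedgeProj {P : W.S} (hP : ¬ ∀ a b : W.Δ P, W.φ P a = W.φ P b) (δ : W.Δ P) :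
    W.IP P ≤ LinearMap.ker (sumWedgeProj δ) := by
  refine Submodule.span_le.mpr ?_
  rintro x (⟨a, b, c, rfl⟩ | ⟨hall, -⟩)
  · simp only [SetLike.mem_coe, LinearMap.mem_ker, map_add, sumWedgeProj_psiW]
    ring
  · exact absurd hall hP

lemma liftQ_sumWedgeProj_wedge (d : W.C → ℕ) (α β : W.C → ZMod p) {P : W.S} {δ : W.Δ P}
    (hδ : W.IP P ≤ LinearMap.ker (sumWedgeProj δ)) :
    (W.IP P).liftQ (sumWedgeProj δ) hδ ((W.wedge d α β).1 P)
      = ∑ δ', (W.muk P δ δ' : ZMod p)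
          * (β (W.φ P δ) * α (W.φ P δ') - α (W.φ P δ) * β (W.φ P δ')) := by
  simp only [wedge, map_sum, map_smul, Submodule.liftQ_apply, sumWedgeProj_psiW, smul_eq_mul, psi]
  rw [sum_sum_mul_single_sub_single]
  refine Finset.sum_congr rfl fun δ' _ => ?_
  rw [W.muk_comm P δ' δ]
  ring

lemma resCond_iff (α β : W.C → ZMod p) (P : W.S) (δ : W.Δ P) :
    W.ResCond α β P δ ↔
      ∑ j, (W.muC P δ j : ZMod p) * (β (W.φ P δ) * α j - α (W.φ P δ) * β j) = 0 := by
  rw [ResCond, mul_sum_sub_mul_sum]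

variable {W} {d : W.C → ℕ} {α β : W.C → ZMod p}

lemma resCond_of_wedge_eq_zero (h : W.wedge d α β = 0) (P : W.S) (δ : W.Δ P) :
    W.ResCond α β P δ := by
  rw [resCond_iff, sum_muC_mul]
  by_cases hP : ∀ a b : W.Δ P, W.φ P a = W.φ P b
  · refine Finset.sum_eq_zero fun δ' _ => ?_
    rw [muk, if_pos (hP δ δ'), Nat.cast_zero, zero_mul]
  · rw [← W.liftQ_sumWedgeProj_wedge d α β (W.IP_le_ker_sumWedgeProj hP δ), h]
    exact map_zero _

lemma IsDegree.mul_sum_mul {R : Type*} [CommSemiring R] (hd : W.IsDegree d) {i : W.C}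
    {γ : W.C → R} (hγ : γ i = 0) :
    (d i : R) * ∑ j, (d j : R) * γ j
      = ∑ P, ∑ δ, if W.φ P δ = i then ∑ j, (W.muC P δ j : R) * γ j else 0 := by
  have bezout (j : W.C) : (d i : R) * ((d j : R) * γ j)
      = ∑ P, ∑ δ, if W.φ P δ = i then (W.muC P δ j : R) * γ j else 0 := by
    obtain rfl | hij := eq_or_ne i j
    · simp only [hγ, mul_zero, ite_self, Finset.sum_const_zero]
    · rw [← mul_assoc, ← Nat.cast_mul, hd.2 i j hij]
      simp only [Nat.cast_sum, Nat.cast_ite, Nat.cast_zero, Finset.sum_mul, ite_mul, zero_mul]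
  rw [Finset.mul_sum, Finset.sum_congr rfl fun j _ => bezout j, Finset.sum_comm]
  refine Finset.sum_congr rfl fun P _ => ?_
  rw [Finset.sum_comm]
  refine Finset.sum_congr rfl fun δ _ => ?_
  split_ifs
  · rfl
  · exact Finset.sum_const_zero

lemma IsDegree.mul_sum_minor_eq_zero (hd : W.IsDegree d) (h : W.wedge d α β = 0) (i : W.C) :
    (d i : ZMod p) * ∑ j, (d j : ZMod p) * (β i * α j - α i * β j) = 0 := by
  have minor_self : β i * α i - α i * β i = 0 := by ring
  rw [hd.mul_sum_mul (γ := fun j => β i * α j - α i * β j) minor_self]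
  refine Finset.sum_eq_zero fun P _ => Finset.sum_eq_zero fun δ _ => ?_
  split_ifs with hδ
  · subst hδ
    exact (resCond_iff W α β P δ).mp (resCond_of_wedge_eq_zero h P δ)
  · rfl

lemma mul_degree_sum_eq_of_dvd (h : W.wedge d α β = 0) {i : W.C} (hi : p ∣ d i) :
    β i * (∑ j, (d j : ZMod p) * α j) = α i * (∑ j, (d j : ZMod p) * β j) :=
  (sub_eq_zero.mp (congrFun (congrArg Prod.snd h) ⟨i, hi⟩)).symm

lemma IsDegree.mul_degree_sum_eq [NoZeroDivisors (ZMod p)] (hd : W.IsDegree d)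
    (h : W.wedge d α β = 0) (i : W.C) :
    β i * (∑ j, (d j : ZMod p) * α j) = α i * (∑ j, (d j : ZMod p) * β j) := by
  by_cases hi : p ∣ d i
  · exact mul_degree_sum_eq_of_dvd h hi
  · have degree_ne_zero : (d i : ZMod p) ≠ 0 := mt (ZMod.natCast_eq_zero_iff _ _).mp hi
    rw [← sub_eq_zero, mul_sum_sub_mul_sum]
    exact (mul_eq_zero.mp (hd.mul_sum_minor_eq_zero h i)).resolve_left degree_ne_zero

end WeakComb

/-- For `p = 0` the coefficients are `ZMod 0 = ℤ`, and `A²` has no part at infinity. -/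
theorem stmt8_general {p : ℕ} [NoZeroDivisors (ZMod p)] (W : WeakComb p) (d : W.C → ℕ)
    (hd : W.IsDegree d) (α β : W.C → ZMod p) (h : W.wedge d α β = 0) :
    (∀ i : W.C,
      β i * (∑ j : W.C, (d j : ZMod p) * α j)
        = α i * (∑ j : W.C, (d j : ZMod p) * β j)) ∧
    (∀ i : W.C, α i = 0 → (∑ j : W.C, (d j : ZMod p) * α j) ≠ 0 → β i = 0) := by
  refine ⟨hd.mul_degree_sum_eq h, fun i hα hne => ?_⟩
  have product_zero := hd.mul_degree_sum_eq h i
  rw [hα, zero_mul] at product_zero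
  exact (mul_eq_zero.mp product_zero).resolve_right hne

section Statements

open WeakComb

variable {p : ℕ} [Fact p.Prime]

/-- the resonance condition at infinity, equation `eq:lambda_i`. -/
theorem stmt8 (W : WeakComb p) (d : W.C → ℕ) (hd : W.IsDegree d)
    (α β : W.C → ZMod p) (h : W.wedge d α β = 0) :
    (∀ i : W.C,
      β i * (∑ j : W.C, (d j : ZMod p) * α j)
        = α i * (∑ j : W.C, (d j : ZMod p) * β j)) ∧
    (∀ i : W.C, α i = 0 → (∑ j : W.C, (d j : ZMod p) * α j) ≠ 0 → β i = 0) :=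
  stmt8_general W d hd α β h

end Statements
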